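/- Let f : [0,t*]×[0,∞) → ℝ be continuous and bounded, a > 0, and G the half-line Dirichlet heat Green's function. Then w(t,y) = ∫₀^t ∫₀^∞ f(τ,ξ) G(y,ξ,a(t−τ)) dξ dτ is 1/2-Hölder in time: |w(t,y) − w(s,y)| ≤ C(a,t*)‖f‖_∞ |t−s|^{1/2} for 0 < s < t ≤ t*. -/

import Mathlib

open MeasureTheory Real Set

/-- The 1D heat kernel `Φ(z,s) = (4πs)^{-1/2} exp(−z²/(4s))`. -/
noncomputable def Phi (z s : ℝ) : ℝ := (1 / Real.sqrt (4 * π * s)) * Real.exp (-z ^ 2 / (4 * s))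

/-- The half-line Dirichlet Green's function `G(y,ξ,s) = Φ(y−ξ,s) − Φ(y+ξ,s)`. -/
noncomputable def Gker (y ξ s : ℝ) : ℝ := Phi (y - ξ) s - Phi (y + ξ) s

lemma Phi_nonneg (z s : ℝ) : 0 ≤ Phi z s := by unfold Phi; positivity

lemma Phi_eq (z s : ℝ) : Phi z s = (1 / Real.sqrt (4 * π * s)) * Real.exp (-(1 / (4 * s)) * z ^ 2) := by
  unfold Phi; congr 2; ring

lemma Phi_integrable {s : ℝ} (hs : 0 < s) : Integrable (fun z => Phi z s) := by
  simp_rw [Phi_eq]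
  exact (integrable_exp_neg_mul_sq (by positivity)).const_mul _

lemma Phi_integral {s : ℝ} (hs : 0 < s) : ∫ z, Phi z s = 1 := by
  simp_rw [Phi_eq]
  rw [integral_const_mul, integral_gaussian]
  have : π / (1 / (4 * s)) = 4 * π * s := by field_simp
  rw [this]
  have : 0 < Real.sqrt (4 * π * s) := by positivity
  field_simp

/-- Majorant of the difference of two heat kernels. -/
noncomputable def Dker (σ₁ σ₂ z : ℝ) : ℝ :=
  Phi z σ₂ + (1 - 2 * (Real.sqrt σ₁ / Real.sqrt σ₂)) * Phi z σ₁

lemma Dker_bound {σ₁ σ₂ : ℝ} (h1 : 0 < σ₁) (h12 : σ₁ ≤ σ₂) (z : ℝ) :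
    |Phi z σ₂ - Phi z σ₁| ≤ Dker σ₁ σ₂ z := by
  have h2 : 0 < σ₂ := lt_of_lt_of_le h1 h12
  have hs1 : 0 < Real.sqrt σ₁ := Real.sqrt_pos.2 h1
  have hs2 : 0 < Real.sqrt σ₂ := Real.sqrt_pos.2 h2
  have hs12 : Real.sqrt σ₁ ≤ Real.sqrt σ₂ := Real.sqrt_le_sqrt h12
  have hr : Real.sqrt σ₁ / Real.sqrt σ₂ ≤ 1 := (div_le_one hs2).2 hs12
  have he : Real.exp (-z ^ 2 / (4 * σ₁)) ≤ Real.exp (-z ^ 2 / (4 * σ₂)) := by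
    apply Real.exp_le_exp.2
    rw [neg_div, neg_div]
    apply neg_le_neg
    gcongr
  have hc : (Real.sqrt σ₁ / Real.sqrt σ₂) * (1 / Real.sqrt (4 * π * σ₁))
      = 1 / Real.sqrt (4 * π * σ₂) := by
    have hp : (0:ℝ) ≤ 4 * π := by positivity
    rw [Real.sqrt_mul hp, Real.sqrt_mul hp]
    have : 0 < Real.sqrt (4 * π) := by positivity
    field_simp
  have hkey : (Real.sqrt σ₁ / Real.sqrt σ₂) * Phi z σ₁ ≤ Phi z σ₂ := by
    unfold Phi
    rw [← mul_assoc, hc]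
    exact mul_le_mul_of_nonneg_left he (by positivity)
  have hn := Phi_nonneg z σ₁
  have h3 : (Real.sqrt σ₁ / Real.sqrt σ₂) * Phi z σ₁ ≤ Phi z σ₁ := by nlinarith
  unfold Dker
  rw [abs_le]
  constructor <;> linarith

lemma Dker_integrable {σ₁ σ₂ : ℝ} (h1 : 0 < σ₁) (h2 : 0 < σ₂) : Integrable (Dker σ₁ σ₂) :=
  (Phi_integrable h2).add ((Phi_integrable h1).const_mul _)

lemma Dker_integral {σ₁ σ₂ : ℝ} (h1 : 0 < σ₁) (h2 : 0 < σ₂) :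
    ∫ z, Dker σ₁ σ₂ z = 2 * (1 - Real.sqrt σ₁ / Real.sqrt σ₂) := by
  unfold Dker
  rw [integral_add (Phi_integrable h2) ((Phi_integrable h1).const_mul _), integral_const_mul,
    Phi_integral h1, Phi_integral h2]
  ring

lemma refl_integrable {D : ℝ → ℝ} (hD : Integrable D) (y : ℝ) :
    Integrable (fun ξ => D (y - ξ) + D (y + ξ)) :=
  (hD.comp_sub_left y).add (hD.comp_add_left y)

lemma refl_integral {D : ℝ → ℝ} (hD : Integrable D) (h0 : ∀ z, 0 ≤ D z) (y : ℝ) :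
    ∫ ξ in Set.Ioi (0:ℝ), (D (y - ξ) + D (y + ξ)) ≤ 2 * ∫ z, D z := by
  calc _ ≤ ∫ ξ, (D (y - ξ) + D (y + ξ)) :=
        setIntegral_le_integral (refl_integrable hD y)
          (Filter.Eventually.of_forall fun ξ => add_nonneg (h0 _) (h0 _))
    _ = _ := by
        rw [integral_add (hD.comp_sub_left y) (hD.comp_add_left y),
          integral_sub_left_eq_self (fun z => D z) volume y,
          integral_add_left_eq_self (fun z => D z) y]
        ring

lemma Gker_abs_le (y ξ s : ℝ) : |Gker y ξ s| ≤ Phi (y - ξ) s + Phi (y + ξ) s := by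
  unfold Gker
  have := Phi_nonneg (y - ξ) s
  have := Phi_nonneg (y + ξ) s
  rw [abs_le]; constructor <;> linarith

lemma Gker_measurable (y a t : ℝ) :
    Measurable (fun p : ℝ × ℝ => Gker y p.2 (a * (t - p.1))) := by
  unfold Gker Phi
  fun_prop

lemma stmt_inner_integrable {f : ℝ × ℝ → ℝ} {M T τ : ℝ}
    (hf : ContinuousOn f (Set.Icc 0 T ×ˢ Set.Ici 0))
    (hM : ∀ p ∈ Set.Icc (0:ℝ) T ×ˢ Set.Ici (0:ℝ), |f p| ≤ M) (hτ : τ ∈ Set.Icc 0 T)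
    {σ : ℝ} (hσ : 0 < σ) (y : ℝ) :
    IntegrableOn (fun ξ => f (τ, ξ) * Gker y ξ σ) (Set.Ioi 0) := by
  have hg : Integrable (fun ξ => M * (Phi (y - ξ) σ + Phi (y + ξ) σ)) :=
    (refl_integrable (Phi_integrable hσ) y).const_mul M
  refine Integrable.mono' hg.integrableOn ?_ ?_
  · apply AEStronglyMeasurable.mul
    · apply ContinuousOn.aestronglyMeasurable _ measurableSet_Ioi
      apply hf.comp (by fun_prop)
      intro ξ hξ
      exact ⟨hτ, Set.Ioi_subset_Ici_self hξ⟩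
    · apply Measurable.aestronglyMeasurable
      unfold Gker Phi
      fun_prop
  · filter_upwards [ae_restrict_mem measurableSet_Ioi] with ξ hξ
    rw [Real.norm_eq_abs, abs_mul]
    have h := hM (τ, ξ) ⟨hτ, Set.Ioi_subset_Ici_self hξ⟩
    exact mul_le_mul h (Gker_abs_le _ _ _) (abs_nonneg _) ((abs_nonneg _).trans h)

lemma stmt_inner_bound {f : ℝ × ℝ → ℝ} {M T τ : ℝ}
    (hM : ∀ p ∈ Set.Icc (0:ℝ) T ×ˢ Set.Ici (0:ℝ), |f p| ≤ M) (hM0 : 0 ≤ M)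
    (hτ : τ ∈ Set.Icc 0 T)
    {σ : ℝ} (hσ : 0 < σ) (y : ℝ) :
    ‖∫ ξ in Set.Ioi (0:ℝ), f (τ, ξ) * Gker y ξ σ‖ ≤ 2 * M := by
  have hg : Integrable (fun ξ => M * (Phi (y - ξ) σ + Phi (y + ξ) σ)) :=
    (refl_integrable (Phi_integrable hσ) y).const_mul M
  refine (norm_integral_le_of_norm_le hg.integrableOn ?_).trans ?_
  · filter_upwards [ae_restrict_mem measurableSet_Ioi] with ξ hξ
    rw [Real.norm_eq_abs, abs_mul]
    have h := hM (τ, ξ) ⟨hτ, Set.Ioi_subset_Ici_self hξ⟩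
    exact mul_le_mul h (Gker_abs_le _ _ _) (abs_nonneg _) ((abs_nonneg _).trans h)
  · rw [integral_const_mul]
    have := refl_integral (Phi_integrable hσ) (fun z => Phi_nonneg z σ) y
    rw [Phi_integral hσ] at this
    nlinarith

lemma stmt_inner_diff {f : ℝ × ℝ → ℝ} {M T τ : ℝ}
    (hf : ContinuousOn f (Set.Icc 0 T ×ˢ Set.Ici 0))
    (hM : ∀ p ∈ Set.Icc (0:ℝ) T ×ˢ Set.Ici (0:ℝ), |f p| ≤ M) (hM0 : 0 ≤ M)
    (hτ : τ ∈ Set.Icc 0 T)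
    {σ₁ σ₂ : ℝ} (h1 : 0 < σ₁) (h12 : σ₁ ≤ σ₂) (y : ℝ) :
    ‖(∫ ξ in Set.Ioi (0:ℝ), f (τ, ξ) * Gker y ξ σ₂) -
      ∫ ξ in Set.Ioi (0:ℝ), f (τ, ξ) * Gker y ξ σ₁‖
      ≤ 4 * M * (1 - Real.sqrt σ₁ / Real.sqrt σ₂) := by
  have h2 : 0 < σ₂ := lt_of_lt_of_le h1 h12
  rw [← integral_sub (stmt_inner_integrable hf hM hτ h2 y) (stmt_inner_integrable hf hM hτ h1 y)]
  have hg : Integrable (fun ξ => M * (Dker σ₁ σ₂ (y - ξ) + Dker σ₁ σ₂ (y + ξ))) :=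
    (refl_integrable (Dker_integrable h1 h2) y).const_mul M
  refine (norm_integral_le_of_norm_le hg.integrableOn ?_).trans ?_
  · filter_upwards [ae_restrict_mem measurableSet_Ioi] with ξ hξ
    rw [← mul_sub, Real.norm_eq_abs, abs_mul]
    have h := hM (τ, ξ) ⟨hτ, Set.Ioi_subset_Ici_self hξ⟩
    refine mul_le_mul h ?_ (abs_nonneg _) hM0
    have e1 := abs_le.1 (Dker_bound h1 h12 (y - ξ))
    have e2 := abs_le.1 (Dker_bound h1 h12 (y + ξ))
    unfold Gker
    rw [abs_le]; constructor <;> linarith [e1.1, e1.2, e2.1, e2.2]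
  · rw [integral_const_mul]
    have := refl_integral (Dker_integrable h1 h2)
      (fun z => (abs_nonneg _).trans (Dker_bound h1 h12 z)) y
    rw [Dker_integral h1 h2] at this
    nlinarith

lemma stmt_outer_integrable {f : ℝ × ℝ → ℝ} {M T t a : ℝ} (ha : 0 < a)
    (hf : ContinuousOn f (Set.Icc 0 T ×ˢ Set.Ici 0))
    (hM : ∀ p ∈ Set.Icc (0:ℝ) T ×ˢ Set.Ici (0:ℝ), |f p| ≤ M) (hM0 : 0 ≤ M)
    (ht : t ≤ T) (y : ℝ) :
    IntegrableOn (fun τ => ∫ ξ in Set.Ioi (0:ℝ), f (τ, ξ) * Gker y ξ (a * (t - τ)))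
      (Set.Ioc 0 t) := by
  rw [integrableOn_Ioc_iff_integrableOn_Ioo]
  refine Integrable.mono' (g := fun _ => 2 * M) (integrableOn_const (by simp)) ?_ ?_
  · have : AEStronglyMeasurable (fun p : ℝ × ℝ => f p * Gker y p.2 (a * (t - p.1)))
        ((volume.restrict (Set.Ioo 0 t)).prod (volume.restrict (Set.Ioi 0))) := by
      apply AEStronglyMeasurable.mul
      · rw [Measure.prod_restrict]
        apply ContinuousOn.aestronglyMeasurable _ (measurableSet_Ioo.prod measurableSet_Ioi)
        apply hf.mono
        rintro ⟨u, v⟩ ⟨hu, hv⟩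
        exact ⟨⟨hu.1.le, hu.2.le.trans ht⟩, Set.Ioi_subset_Ici_self hv⟩
      · exact (Gker_measurable y a t).aestronglyMeasurable
    exact this.integral_prod_right'
  · filter_upwards [ae_restrict_mem measurableSet_Ioo] with τ hτ
    exact stmt_inner_bound hM hM0 ⟨hτ.1.le, hτ.2.le.trans ht⟩
      (mul_pos ha (sub_pos.2 hτ.2)) y

lemma ratio_bound {a s t τ : ℝ} (ha : 0 < a) (hτ : τ < s) (hst : s < t) :
    1 - Real.sqrt (a * (s - τ)) / Real.sqrt (a * (t - τ))
      ≤ Real.sqrt (t - s) * (1 / Real.sqrt (t - τ)) := by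
  rw [Real.sqrt_mul ha.le, Real.sqrt_mul ha.le]
  have h1 : 0 < Real.sqrt a := Real.sqrt_pos.2 ha
  have h2 : 0 < Real.sqrt (t - τ) := Real.sqrt_pos.2 (by linarith)
  rw [mul_div_mul_left _ _ h1.ne', mul_one_div, sub_le_iff_le_add, ← add_div, le_div_iff₀ h2,
    one_mul]
  have e : t - τ = (t - s) + (s - τ) := by ring
  rw [e]
  refine Real.sqrt_le_iff.2 ⟨by positivity, ?_⟩
  have q1 := Real.sq_sqrt (show 0 ≤ t - s by linarith)
  have q2 := Real.sq_sqrt (show 0 ≤ s - τ by linarith)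
  nlinarith [mul_nonneg (Real.sqrt_nonneg (t - s)) (Real.sqrt_nonneg (s - τ))]

lemma inv_sqrt_cont {s t : ℝ} (hst : s < t) :
    ContinuousOn (fun τ : ℝ => 1 / Real.sqrt (t - τ)) (Set.Icc 0 s) := by
  apply ContinuousOn.div (by fun_prop) (by fun_prop)
  intro τ hτ
  exact (Real.sqrt_pos.2 (by linarith [hτ.2])).ne'

lemma inv_sqrt_integral {s t : ℝ} (hs : 0 < s) (hst : s < t) :
    ∫ τ in Set.Ioo (0:ℝ) s, 1 / Real.sqrt (t - τ) ≤ 2 * Real.sqrt t := by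
  rw [← integral_Ioc_eq_integral_Ioo, ← intervalIntegral.integral_of_le hs.le]
  rw [intervalIntegral.integral_eq_sub_of_hasDerivAt (f := fun τ => -2 * Real.sqrt (t - τ))]
  · simp only [sub_zero]
    linarith [Real.sqrt_nonneg (t - s)]
  · intro τ hτ
    rw [Set.uIcc_of_le hs.le] at hτ
    have hp : 0 < t - τ := by linarith [hτ.2]
    have := (((hasDerivAt_id τ).const_sub t).sqrt hp.ne').const_mul (-2)
    have hq := Real.sqrt_pos.2 hp
    have e : 1 / Real.sqrt (t - τ) = -2 * (-1 / (2 * Real.sqrt (t - id τ))) := by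
      simp only [id]
      field_simp
    rw [e]
    exact this
  · apply ContinuousOn.intervalIntegrable
    rw [Set.uIcc_of_le hs.le]
    exact inv_sqrt_cont hst

theorem stmt13 (a tstar : ℝ) (ha : 0 < a) (htstar : 0 < tstar) :
    ∃ C > (0 : ℝ), ∀ (f : ℝ × ℝ → ℝ) (M : ℝ),
      ContinuousOn f (Set.Icc 0 tstar ×ˢ Set.Ici 0) →
      (∀ p ∈ Set.Icc (0:ℝ) tstar ×ˢ Set.Ici (0:ℝ), |f p| ≤ M) →
      ∀ s t y : ℝ, 0 < s → s < t → t ≤ tstar → 0 ≤ y →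
        |(∫ τ in Set.Ioc (0 : ℝ) t, ∫ ξ in Set.Ioi (0 : ℝ), f (τ, ξ) * Gker y ξ (a * (t - τ))) -
            ∫ τ in Set.Ioc (0 : ℝ) s, ∫ ξ in Set.Ioi (0 : ℝ), f (τ, ξ) * Gker y ξ (a * (s - τ))|
          ≤ C * M * |t - s| ^ ((1 : ℝ) / 2) := by
  have hT : 0 < Real.sqrt tstar := Real.sqrt_pos.2 htstar
  refine ⟨10 * Real.sqrt tstar, by positivity, ?_⟩
  intro f M hf hM s t y hs hst ht hy
  have hM0 : 0 ≤ M := (abs_nonneg _).trans (hM (0, 0) ⟨⟨le_rfl, htstar.le⟩, le_refl (0:ℝ)⟩)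
  have hIt := stmt_outer_integrable ha hf hM hM0 ht y
  have hIs := stmt_outer_integrable ha hf hM hM0 (hst.le.trans ht) y
  rw [← Real.sqrt_eq_rpow, abs_of_pos (sub_pos.2 hst)]
  have hsub1 : Set.Ioc 0 s ⊆ Set.Ioc 0 t := Set.Ioc_subset_Ioc_right hst.le
  have hsub2 : Set.Ioc s t ⊆ Set.Ioc 0 t := Set.Ioc_subset_Ioc_left hs.le
  rw [← Set.Ioc_union_Ioc_eq_Ioc hs.le hst.le,
    setIntegral_union (Set.Ioc_disjoint_Ioc_of_le le_rfl) measurableSet_Ioc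
      (hIt.mono_set hsub1) (hIt.mono_set hsub2), add_sub_right_comm,
    ← integral_sub (hIt.mono_set hsub1) hIs, integral_Ioc_eq_integral_Ioo,
    integral_Ioc_eq_integral_Ioo]
  have hA : ‖∫ τ in Set.Ioo 0 s, ((∫ ξ in Set.Ioi (0 : ℝ), f (τ, ξ) * Gker y ξ (a * (t - τ))) -
      ∫ ξ in Set.Ioi (0 : ℝ), f (τ, ξ) * Gker y ξ (a * (s - τ)))‖
      ≤ 8 * M * Real.sqrt tstar * Real.sqrt (t - s) := by
    have hgi : IntegrableOn (fun τ => 4 * M * Real.sqrt (t - s) * (1 / Real.sqrt (t - τ)))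
        (Set.Ioo 0 s) :=
      (((inv_sqrt_cont hst).integrableOn_Icc).mono_set Set.Ioo_subset_Icc_self).const_mul _
    refine (norm_integral_le_of_norm_le hgi ?_).trans ?_
    · filter_upwards [ae_restrict_mem measurableSet_Ioo] with τ hτ
      refine (stmt_inner_diff hf hM hM0 ⟨hτ.1.le, by linarith [hτ.2]⟩
        (mul_pos ha (sub_pos.2 hτ.2)) (by gcongr) y).trans ?_
      rw [mul_assoc (4 * M)]
      exact mul_le_mul_of_nonneg_left (ratio_bound ha hτ.2 hst) (by positivity)
    · rw [integral_const_mul]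
      have h1 := inv_sqrt_integral hs hst
      have h2 := Real.sqrt_le_sqrt ht
      calc _ ≤ 4 * M * Real.sqrt (t - s) * (2 * Real.sqrt tstar) :=
            mul_le_mul_of_nonneg_left (by linarith) (by positivity)
        _ = _ := by ring
  have hB : ‖∫ τ in Set.Ioo s t, ∫ ξ in Set.Ioi (0 : ℝ), f (τ, ξ) * Gker y ξ (a * (t - τ))‖
      ≤ 2 * M * (t - s) := by
    refine (norm_setIntegral_le_of_norm_le_const (C := 2 * M) (by simp) ?_).trans ?_
    · intro τ hτ
      exact stmt_inner_bound hM hM0 ⟨by linarith [hτ.1], by linarith [hτ.2]⟩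
        (mul_pos ha (sub_pos.2 hτ.2)) y
    · simp [hst.le]
  have hts : t - s ≤ Real.sqrt tstar * Real.sqrt (t - s) := by
    have h1 : Real.sqrt (t - s) ≤ Real.sqrt tstar := Real.sqrt_le_sqrt (by linarith)
    have h2 := Real.mul_self_sqrt (show 0 ≤ t - s by linarith)
    nlinarith [Real.sqrt_nonneg (t - s)]
  rw [← Real.norm_eq_abs]
  refine (norm_add_le _ _).trans ?_
  have := mul_le_mul_of_nonneg_left hts (show 0 ≤ 2 * M by positivity)
  linarith
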